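/- arXiv:1508.07408 — 2 statements merged into one kernel-verified Lean document; each statement's English description precedes it below -/
import Mathlib

section
/- Let α ≥ 1, ν = (1−α)/2 and λ < 0, and define y : (0,∞) → ℝ by y(x) = x^ν · I_{−ν}(x·√|λ|). Then y is twice differentiable on (0,∞), satisfies −(x^α · y'(x))' − λ · x^α · y(x) = 0 for all x ∈ (0,1), y(x) tends to the finite limit (√|λ|/2)^{−ν}/Γ(1−ν) as x → 0+, and y'(x) → 0 as x → 0+ (so y is bounded in a neighbourhood of the origin and satisfies the boundary condition y'(0) = 0). -/
/-- The modified Bessel function of the first kind of real order `μ`,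
`I_μ(x) = ∑ 1/(m!·Γ(m+μ+1))·(x/2)^{2m+μ}` (terms with `Γ` at nonpositive
integers vanish, since `Real.Gamma` vanishes there). -/
noncomputable def besselI (μ x : ℝ) : ℝ :=
  ∑' m : ℕ, (1 / ((m.factorial : ℝ) * Real.Gamma ((m : ℝ) + μ + 1))) *
    (x / 2) ^ (2 * (m : ℝ) + μ)

/-!
Write `C_μ(t) = ∑ t ^ m / (m! Γ(m + μ + 1))` for the Bessel–Clifford function, an entire function of
`t`. For `c = s / 2` and `x > 0`, the function `y(x) = x ^ (-μ) * I_μ(s x)` equals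
`c ^ μ * C_μ((c x) ^ 2)`, so it extends to an even smooth function on `ℝ`; this gives its limit at
`0` and the vanishing of its derivative there. Since `C_μ' = C_{μ+1}`, the equation
`(x ^ (2μ+1) y')' = s ^ 2 x ^ (2μ+1) y` reduces to the contiguity relation
`C_μ(t) = (μ + 1) C_{μ+1}(t) + t C_{μ+2}(t)`, which is `Γ(z + 1) = z Γ(z)` read off coefficientwise.
-/

open Filter Set Topology

theorem hasDerivAt_tsum_mul_pow {𝕜 : Type*} [RCLike 𝕜] {a : ℕ → 𝕜} {r : ℝ} {t : 𝕜}
    (ha : Summable fun m : ℕ ↦ ‖((m : 𝕜) + 1) * a (m + 1)‖ * r ^ m) (ht : ‖t‖ < r) :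
    HasDerivAt (fun z ↦ ∑' m, a m * z ^ m) (∑' m : ℕ, ((m : 𝕜) + 1) * a (m + 1) * t ^ m) t := by
  have hr : 0 < r := (norm_nonneg t).trans_lt ht
  have hbound : Summable fun m : ℕ ↦ ‖a m * (m : 𝕜)‖ * r ^ (m - 1) :=
    (summable_nat_add_iff 1).mp (by simpa [mul_comm] using ha)
  have hterm : ∀ (m : ℕ) (z : 𝕜), z ∈ Metric.ball 0 r →
      ‖a m * (m * z ^ (m - 1))‖ ≤ ‖a m * (m : 𝕜)‖ * r ^ (m - 1) := by
    intro m z hz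
    rw [← mul_assoc, norm_mul, norm_pow]
    gcongr
    exact (mem_ball_zero_iff.mp hz).le
  have hderiv := hasDerivAt_tsum_of_isPreconnected hbound Metric.isOpen_ball
    (convex_ball (0 : 𝕜) r).isPreconnected (fun m z _ ↦ (hasDerivAt_pow m z).const_mul (a m))
    hterm (Metric.mem_ball_self hr) (summable_of_ne_finset_zero (s := {0}) (by simp +contextual))
    (mem_ball_zero_iff.mpr ht)
  have hsum : Summable fun m : ℕ ↦ a m * (m * t ^ (m - 1)) :=
    .of_norm_bounded hbound fun m ↦ hterm m t (mem_ball_zero_iff.mpr ht)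
  refine hderiv.congr_deriv ?_
  simp [hsum.tsum_eq_zero_add, mul_left_comm, mul_assoc]

theorem inv_realGamma_eq_self_mul_inv_realGamma_add_one (s : ℝ) :
    (Real.Gamma s)⁻¹ = s * (Real.Gamma (s + 1))⁻¹ := by
  have h := Complex.one_div_Gamma_eq_self_mul_one_div_Gamma_add_one s
  rw [← Complex.ofReal_one, ← Complex.ofReal_add, Complex.Gamma_ofReal, Complex.Gamma_ofReal] at h
  exact_mod_cast h

/-- The coefficients `1 / (m! Γ(m + μ + 1))` of the Bessel–Clifford function of order `μ`. At the
poles of `Γ` the conventions `Γ = 0` and `1 / 0 = 0` give the true value `0` of the entire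
function `1 / Γ`. -/
noncomputable def besselCliffordCoeff (μ : ℝ) (m : ℕ) : ℝ :=
  1 / ((m.factorial : ℝ) * Real.Gamma ((m : ℝ) + μ + 1))

/-- The Bessel–Clifford function `C_μ(t) = ∑ t ^ m / (m! Γ(m + μ + 1))`, the entire function which
remains of `I_μ` after splitting off the power `(x / 2) ^ μ` and substituting `t = (x / 2) ^ 2`. -/
noncomputable def besselClifford (μ t : ℝ) : ℝ :=
  ∑' m : ℕ, besselCliffordCoeff μ m * t ^ m

section BesselClifford

variable (μ : ℝ)

theorem succ_mul_besselCliffordCoeff_succ (m : ℕ) :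
    ((m : ℝ) + 1) * besselCliffordCoeff μ (m + 1) = besselCliffordCoeff (μ + 1) m := by
  have hshift : ((m + 1 : ℕ) : ℝ) + μ + 1 = m + (μ + 1) + 1 := by push_cast; ring
  rw [besselCliffordCoeff, besselCliffordCoeff, hshift, Nat.factorial_succ]
  push_cast
  field_simp

theorem besselCliffordCoeff_eq_mul_besselCliffordCoeff_add_one (m : ℕ) :
    besselCliffordCoeff μ m = (m + μ + 1) * besselCliffordCoeff (μ + 1) m := by
  have hshift : (m : ℝ) + (μ + 1) + 1 = m + μ + 1 + 1 := by ring
  rw [besselCliffordCoeff, besselCliffordCoeff, hshift, one_div, one_div, mul_inv, mul_inv,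
    inv_realGamma_eq_self_mul_inv_realGamma_add_one, mul_left_comm]

theorem ofReal_besselCliffordCoeff (m : ℕ) :
    (besselCliffordCoeff μ m : ℂ) = Complex.regularizedHGFunCoeff 0 {(μ : ℂ) + 1} m := by
  have hshift : (μ : ℂ) + 1 + m = ((m + μ + 1 : ℝ) : ℂ) := by push_cast; ring
  simp only [besselCliffordCoeff, Complex.regularizedHGFunCoeff, Multiset.map_zero,
    Multiset.prod_zero, Multiset.map_singleton, Multiset.prod_singleton, hshift,
    Complex.Gamma_ofReal]
  push_cast
  rfl

theorem summable_norm_besselCliffordCoeff_mul_pow (r : NNReal) :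
    Summable fun m : ℕ ↦ ‖besselCliffordCoeff μ m‖ * (r : ℝ) ^ m := by
  have hradius : (Complex.regularizedHGFunSeries 0 {(μ : ℂ) + 1}).radius = ⊤ :=
    Complex.radius_regularizedHGFunSeries_eq_top (by simp)
  refine (FormalMultilinearSeries.summable_norm_mul_pow _ (r := r)
    (hradius ▸ ENNReal.coe_lt_top)).congr fun m ↦ ?_
  rw [FormalMultilinearSeries.norm_apply_eq_norm_coef, Complex.regularizedHGFunSeries_coeff,
    ← ofReal_besselCliffordCoeff, Complex.norm_real]

theorem summable_besselCliffordCoeff_mul_pow (t : ℝ) :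
    Summable fun m : ℕ ↦ besselCliffordCoeff μ m * t ^ m :=
  .of_norm (by simpa using summable_norm_besselCliffordCoeff_mul_pow μ ‖t‖₊)

theorem besselClifford_zero : besselClifford μ 0 = 1 / Real.Gamma (μ + 1) := by
  rw [besselClifford, tsum_eq_single 0 fun m hm ↦ by simp [hm]]
  simp [besselCliffordCoeff]

theorem hasDerivAt_besselClifford (t : ℝ) :
    HasDerivAt (besselClifford μ) (besselClifford (μ + 1) t) t := by
  have hsum := summable_norm_besselCliffordCoeff_mul_pow (μ + 1) (‖t‖₊ + 1)
  simp only [← succ_mul_besselCliffordCoeff_succ] at hsum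
  refine (hasDerivAt_tsum_mul_pow hsum (by simp)).congr_deriv ?_
  simp only [besselClifford, ← succ_mul_besselCliffordCoeff_succ]

theorem besselClifford_eq_add (t : ℝ) :
    besselClifford μ t =
      (μ + 1) * besselClifford (μ + 1) t + t * besselClifford (μ + 2) t := by
  have hshift : HasSum (fun m : ℕ ↦ m * (besselCliffordCoeff (μ + 1) m * t ^ m))
      (t * besselClifford (μ + 2) t) := by
    refine (hasSum_nat_add_iff' 1).mp ?_
    have hsum := (summable_besselCliffordCoeff_mul_pow (μ + 1 + 1) t).hasSum.mul_left t
    simp only [← succ_mul_besselCliffordCoeff_succ (μ + 1)] at hsum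
    convert! hsum using 1
    · ext m
      push_cast
      ring
    · simp [besselClifford, succ_mul_besselCliffordCoeff_succ, add_assoc, one_add_one_eq_two]
  have hsum := (summable_besselCliffordCoeff_mul_pow (μ + 1) t).hasSum.mul_left (μ + 1)
  refine HasSum.tsum_eq ((hsum.add hshift).congr_fun fun m ↦ ?_)
  rw [besselCliffordCoeff_eq_mul_besselCliffordCoeff_add_one]
  ring

theorem hasDerivAt_besselClifford_sq (c x : ℝ) :
    HasDerivAt (fun x ↦ besselClifford μ ((c * x) ^ 2))
      (2 * c ^ 2 * x * besselClifford (μ + 1) ((c * x) ^ 2)) x := by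
  have hsq : HasDerivAt (fun x ↦ (c * x) ^ 2) (2 * c ^ 2 * x) x :=
    (((hasDerivAt_id x).const_mul c).pow 2).congr_deriv (by simp; ring)
  exact ((hasDerivAt_besselClifford μ _).comp x hsq).congr_deriv (mul_comm _ _)

theorem differentiable_mul_besselClifford_sq (b c : ℝ) :
    Differentiable ℝ fun x ↦ b * x * besselClifford μ ((c * x) ^ 2) := fun x ↦
  (differentiableAt_id.const_mul b).mul (hasDerivAt_besselClifford_sq μ c x).differentiableAt

theorem hasDerivAt_rpow_mul_besselClifford_sq (c : ℝ) {x : ℝ} (hx : x ≠ 0) :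
    HasDerivAt (fun x ↦ x ^ (2 * μ + 1) * (2 * c ^ 2 * x * besselClifford (μ + 1) ((c * x) ^ 2)))
      (4 * c ^ 2 * x ^ (2 * μ + 1) * besselClifford μ ((c * x) ^ 2)) x := by
  have hpow : HasDerivAt (fun x : ℝ ↦ x ^ (2 * μ + 1)) ((2 * μ + 1) * x ^ (2 * μ)) x := by
    simpa using Real.hasDerivAt_rpow_const (p := 2 * μ + 1) (.inl hx)
  have hlin : HasDerivAt (fun x ↦ 2 * c ^ 2 * x) (2 * c ^ 2) x := by
    simpa using (hasDerivAt_id x).const_mul (2 * c ^ 2)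
  refine (hpow.mul (hlin.mul (hasDerivAt_besselClifford_sq (μ + 1) c x))).congr_deriv ?_
  rw [besselClifford_eq_add μ, Real.rpow_add_one hx, add_assoc μ 1 1, one_add_one_eq_two]
  simp only [Pi.mul_apply]
  ring

end BesselClifford

/-- The function `x ↦ x ^ (-μ) * I_μ(s x)`, the modified Bessel function rescaled and freed of its
power behaviour at the origin. Only its values at `x > 0` are meaningful. -/
noncomputable def normalizedBesselI (μ s x : ℝ) : ℝ :=
  x ^ (-μ) * besselI μ (x * s)

section NormalizedBesselI

variable (μ : ℝ) {s : ℝ}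

theorem eqOn_normalizedBesselI (hs : 0 < s) :
    EqOn (normalizedBesselI μ s) (fun x ↦ (s / 2) ^ μ * besselClifford μ ((s / 2 * x) ^ 2))
      (Ioi 0) := by
  intro x hx
  have hx : 0 < x := hx
  simp only [normalizedBesselI, besselI, besselClifford, ← tsum_mul_left]
  refine tsum_congr fun m ↦ ?_
  have hpow : (x * s / 2) ^ (2 * (m : ℝ) + μ) =
      ((s / 2 * x) ^ 2) ^ m * ((s / 2) ^ μ * x ^ μ) := by
    rw [show x * s / 2 = s / 2 * x by ring, Real.rpow_add (by positivity),
      Real.mul_rpow (z := μ) (by positivity) hx.le, ← pow_mul, ← Real.rpow_natCast]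
    push_cast
    rfl
  have hcancel : x ^ (-μ) * x ^ μ = 1 := by rw [← Real.rpow_add hx, neg_add_cancel, Real.rpow_zero]
  rw [hpow, ← besselCliffordCoeff]
  linear_combination
    besselCliffordCoeff μ m * ((s / 2 * x) ^ 2) ^ m * (s / 2) ^ μ * hcancel

theorem eqOn_deriv_normalizedBesselI (hs : 0 < s) :
    EqOn (deriv (normalizedBesselI μ s))
      (fun x ↦ (s / 2) ^ μ * (2 * (s / 2) ^ 2 * x * besselClifford (μ + 1) ((s / 2 * x) ^ 2)))
      (Ioi 0) :=
  ((eqOn_normalizedBesselI μ hs).deriv isOpen_Ioi).trans fun x _ ↦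
    ((hasDerivAt_besselClifford_sq μ (s / 2) x).const_mul _).deriv

theorem differentiableOn_normalizedBesselI (hs : 0 < s) :
    DifferentiableOn ℝ (normalizedBesselI μ s) (Ioi 0) :=
  DifferentiableOn.congr (fun x _ ↦ ((hasDerivAt_besselClifford_sq μ (s / 2) x).const_mul
    _).differentiableAt.differentiableWithinAt) (eqOn_normalizedBesselI μ hs)

theorem differentiableOn_deriv_normalizedBesselI (hs : 0 < s) :
    DifferentiableOn ℝ (deriv (normalizedBesselI μ s)) (Ioi 0) :=
  ((differentiable_mul_besselClifford_sq (μ + 1) _ _).const_mul _).differentiableOn.congr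
    (eqOn_deriv_normalizedBesselI μ hs)

theorem deriv_rpow_mul_deriv_normalizedBesselI (hs : 0 < s) {x : ℝ} (hx : 0 < x) :
    deriv (fun x ↦ x ^ (2 * μ + 1) * deriv (normalizedBesselI μ s) x) x =
      s ^ 2 * x ^ (2 * μ + 1) * normalizedBesselI μ s x := by
  have hflux : EqOn (fun x ↦ x ^ (2 * μ + 1) * deriv (normalizedBesselI μ s) x)
      (fun x ↦ (s / 2) ^ μ * (x ^ (2 * μ + 1) *
        (2 * (s / 2) ^ 2 * x * besselClifford (μ + 1) ((s / 2 * x) ^ 2)))) (Ioi 0) := by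
    intro z hz
    simp only [eqOn_deriv_normalizedBesselI μ hs hz]
    ring
  rw [hflux.deriv isOpen_Ioi hx, eqOn_normalizedBesselI μ hs hx,
    ((hasDerivAt_rpow_mul_besselClifford_sq μ (s / 2) hx.ne').const_mul _).deriv]
  ring

theorem tendsto_normalizedBesselI_nhdsGT_zero (hs : 0 < s) :
    Tendsto (normalizedBesselI μ s) (𝓝[>] 0) (𝓝 ((s / 2) ^ μ / Real.Gamma (μ + 1))) := by
  have hcont := ((hasDerivAt_besselClifford_sq μ (s / 2) 0).const_mul
    ((s / 2) ^ μ)).continuousAt.tendsto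
  rw [mul_zero, zero_pow two_ne_zero, besselClifford_zero, mul_one_div] at hcont
  exact tendsto_nhdsWithin_congr (fun x hx ↦ (eqOn_normalizedBesselI μ hs hx).symm)
    (hcont.mono_left nhdsWithin_le_nhds)

theorem tendsto_deriv_normalizedBesselI_nhdsGT_zero (hs : 0 < s) :
    Tendsto (deriv (normalizedBesselI μ s)) (𝓝[>] 0) (𝓝 0) := by
  have hcont := ((differentiable_mul_besselClifford_sq (μ + 1) (2 * (s / 2) ^ 2) (s / 2)).const_mul
    ((s / 2) ^ μ)).continuous.tendsto 0
  simp only [mul_zero, zero_mul] at hcont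
  exact tendsto_nhdsWithin_congr (fun x hx ↦ (eqOn_deriv_normalizedBesselI μ hs hx).symm)
    (hcont.mono_left nhdsWithin_le_nhds)

end NormalizedBesselI

/-- For `α = -1, -3, …` the divisor `Γ(1 - ν)` is the junk value `0` at a pole; the quotient `0` is
then still the true limit, because the entire function `1 / Γ` vanishes there. -/
theorem bounded_solution_neg_lambda_general (α lam : ℝ) (hlam : lam < 0) :
    let ν : ℝ := (1 - α) / 2
    let y : ℝ → ℝ := fun x => x ^ ν * besselI (-ν) (x * Real.sqrt |lam|)
    (∀ x > (0 : ℝ), DifferentiableAt ℝ y x) ∧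
    (∀ x > (0 : ℝ), DifferentiableAt ℝ (deriv y) x) ∧
    (∀ x > (0 : ℝ),
      -(deriv (fun x : ℝ => x ^ α * deriv y x) x) - lam * x ^ α * y x = 0) ∧
    Tendsto y (𝓝[>] 0) (𝓝 ((Real.sqrt |lam| / 2) ^ (-ν) / Real.Gamma (1 - ν))) ∧
    Tendsto (deriv y) (𝓝[>] 0) (𝓝 0) := by
  intro ν y
  have hy : y = normalizedBesselI (-ν) √|lam| := by
    funext x
    simp only [y, normalizedBesselI, neg_neg]
  have hα : α = 2 * -ν + 1 := by ring
  have hs : 0 < √|lam| := Real.sqrt_pos.mpr (abs_pos.mpr hlam.ne)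
  have hlam_eq : lam = -√|lam| ^ 2 := by rw [Real.sq_sqrt (abs_nonneg _), abs_of_neg hlam, neg_neg]
  rw [hy]
  refine ⟨fun x hx ↦ (differentiableOn_normalizedBesselI _ hs).differentiableAt (Ioi_mem_nhds hx),
    fun x hx ↦ (differentiableOn_deriv_normalizedBesselI _ hs).differentiableAt (Ioi_mem_nhds hx),
    fun x hx ↦ ?_, ?_, tendsto_deriv_normalizedBesselI_nhdsGT_zero _ hs⟩
  · have hode := deriv_rpow_mul_deriv_normalizedBesselI (-ν) hs hx
    rw [← hα] at hode
    linear_combination -hode - x ^ α * normalizedBesselI (-ν) √|lam| x * hlam_eq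
  · rw [sub_eq_neg_add]
    exact tendsto_normalizedBesselI_nhdsGT_zero _ hs

/-- For `α ≥ 1`, `ν = (1−α)/2` and `λ < 0`, the function `y(x) = x^ν·I_{−ν}(x√|λ|)`
is twice differentiable on `(0,∞)`, satisfies `−(x^α y')' − λ x^α y = 0` on `(0,1)`,
tends to `(√|λ|/2)^{−ν}/Γ(1−ν)` as `x → 0⁺`, and `y'(x) → 0` as `x → 0⁺`. -/
theorem bounded_solution_neg_lambda (α lam : ℝ) (hα : 1 ≤ α) (hlam : lam < 0) :
    let ν : ℝ := (1 - α) / 2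
    let y : ℝ → ℝ := fun x => x ^ ν * besselI (-ν) (x * Real.sqrt |lam|)
    (∀ x > (0 : ℝ), DifferentiableAt ℝ y x) ∧
    (∀ x > (0 : ℝ), DifferentiableAt ℝ (deriv y) x) ∧
    (∀ x ∈ Set.Ioo (0 : ℝ) 1,
      -(deriv (fun x : ℝ => x ^ α * deriv y x) x) - lam * x ^ α * y x = 0) ∧
    Filter.Tendsto y (nhdsWithin 0 (Set.Ioi 0))
      (nhds ((Real.sqrt |lam| / 2) ^ (-ν) / Real.Gamma (1 - ν))) ∧
    Filter.Tendsto (deriv y) (nhdsWithin 0 (Set.Ioi 0)) (nhds 0) := by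
  obtain ⟨hdiff, hdiff', hode, hlim, hlim'⟩ := bounded_solution_neg_lambda_general α lam hlam
  exact ⟨hdiff, hdiff', fun x hx ↦ hode x hx.1, hlim, hlim'⟩
end

section
/- Let α ≥ 1, set ν = (1−α)/2, let λ < 0, let 0 < η < 1, and suppose (H_0') holds: δ > 0, K_ν(√|λ|) − δ·η^ν·K_ν(η·√|λ|) ≤ 0, and I_{−ν}(√|λ|) − δ·η^ν·I_{−ν}(η·√|λ|) > 0. Then the Green's function G satisfies G(x,t) ≤ 0 for all x ∈ [0,1] and t ∈ (0,1]. -/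
/-- The modified Bessel function of the second kind of real order `μ`,
`K_μ(x) = ∫_0^∞ e^{−x·cosh t}·cosh(μt) dt`. -/
noncomputable def besselK (μ x : ℝ) : ℝ :=
  ∫ t in Set.Ioi (0 : ℝ), Real.exp (-(x * Real.cosh t)) * Real.cosh (μ * t)

/-- The Green's function for the three-point singular BVP
`−(x^α y')' − λ x^α y = 0`, `y'(0) = 0`, `y(1) = δ·y(η)` with `λ < 0` and
`ν = (1−α)/2`, expressed through modified Bessel functions. -/
noncomputable def greenIK (ν lam δ η x t : ℝ) : ℝ :=
  let m := Real.sqrt |lam|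
  let D := besselI (-ν) m - δ * η ^ ν * besselI (-ν) (η * m)
  if t ≤ η then
    if x ≤ t then
      t ^ ν * x ^ ν * besselI (-ν) (x * m) *
        (besselI (-ν) (t * m) * (besselK ν m - δ * η ^ ν * besselK ν (η * m))
          - besselK ν (t * m) * D) / D
    else
      t ^ ν * x ^ ν * besselI (-ν) (t * m) *
        (besselI (-ν) (x * m) * (besselK ν m - δ * η ^ ν * besselK ν (η * m))
          - besselK ν (x * m) * D) / D
  else
    if x ≤ t then
      t ^ ν * x ^ ν * besselI (-ν) (x * m) *
        (besselK ν m * besselI (-ν) (t * m) - besselI (-ν) m * besselK ν (t * m)) / D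
    else
      t ^ ν * x ^ ν *
        (besselI (-ν) (x * m) * (besselK ν m * besselI (-ν) (t * m)
            - δ * η ^ ν * besselI (-ν) (η * m) * besselK ν (t * m))
          - besselI (-ν) (t * m) * besselK ν (x * m) * D) / D

/-!
The denominator `D` and the factors `t ^ ν * x ^ ν` and `I_{-ν}` are nonnegative, so only the sign
of the bracket in each branch of `greenIK` matters. For `t ≤ η` it is immediate from the signs
of `D` and `K_ν(√|λ|) - δ η^ν K_ν(η √|λ|)`. For `η < t` it comes from
`I_{-ν}(x) K_ν(y) ≤ I_{-ν}(y) K_ν(x)` for `0 < x ≤ y`, which holds because `I_{-ν}` increases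
(the coefficients and exponents of its series are nonnegative, as `-ν ≥ 0`) and `K_ν` decreases
(so does the integrand defining it).
-/

section

open Filter MeasureTheory Set

variable {μ ν x y : ℝ}

/-- The `m`-th term of the series defining `besselI μ x`. As in `besselI`, a pole of `Gamma`
gives the term `0`, through `Real.Gamma (-n) = 0` and division by zero. -/
noncomputable def besselITerm (μ x : ℝ) (m : ℕ) : ℝ :=
  (1 / ((m.factorial : ℝ) * Real.Gamma ((m : ℝ) + μ + 1))) * (x / 2) ^ (2 * (m : ℝ) + μ)

theorem besselITerm_nonneg (hμ : -1 ≤ μ) (hx : 0 ≤ x) (m : ℕ) : 0 ≤ besselITerm μ x m := by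
  have hΓ : 0 ≤ Real.Gamma (m + μ + 1) :=
    Real.Gamma_nonneg_of_nonneg (by linarith [m.cast_nonneg (α := ℝ)])
  unfold besselITerm
  positivity

theorem monotoneOn_besselITerm (hμ : 0 ≤ μ) (m : ℕ) :
    MonotoneOn (besselITerm μ · m) (Ici 0) := by
  intro x (hx : 0 ≤ x) y _ hxy
  simp only [besselITerm]
  gcongr

theorem besselITerm_succ (hx : 0 ≤ x) {m : ℕ} (hm : 0 < m + μ + 1) :
    besselITerm μ x (m + 1) =
      (x / 2) ^ 2 / ((m + 1) * (m + μ + 1)) * besselITerm μ x m := by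
  have hpow : (x / 2) ^ (2 * ((m + 1 : ℕ) : ℝ) + μ) =
      (x / 2) ^ (2 * (m : ℝ) + μ) * (x / 2) ^ 2 := by
    rw [← Real.rpow_natCast (x / 2) 2, ← Real.rpow_add' (by positivity)]
    · congr 1
      push_cast
      ring
    · push_cast
      linarith [m.cast_nonneg (α := ℝ)]
  have hΓ : Real.Gamma (((m + 1 : ℕ) : ℝ) + μ + 1) = (m + μ + 1) * Real.Gamma (m + μ + 1) := by
    rw [← Real.Gamma_add_one hm.ne']
    congr 1
    push_cast
    ring
  rw [besselITerm, besselITerm, hpow, hΓ, Nat.factorial_succ]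
  push_cast
  field_simp

theorem summable_besselITerm (μ : ℝ) (hx : 0 ≤ x) : Summable (besselITerm μ x) := by
  have hlin (c : ℝ) : Tendsto (fun m : ℕ ↦ (m : ℝ) + c) atTop atTop :=
    tendsto_atTop_add_const_right _ c tendsto_natCast_atTop_atTop
  have hratio :
      Tendsto (fun m : ℕ ↦ (x / 2) ^ 2 / (((m : ℝ) + 1) * (m + (μ + 1)))) atTop (nhds 0) :=
    ((hlin 1).atTop_mul_atTop₀ (hlin (μ + 1))).const_div_atTop _
  refine summable_of_ratio_norm_eventually_le (r := 1 / 2) (by norm_num) ?_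
  filter_upwards [hratio.eventually_le_const (u := 1 / 2) (by norm_num),
    (hlin (μ + 1)).eventually_gt_atTop 0] with m hhalf hpos
  rw [← add_assoc] at hhalf hpos
  rw [besselITerm_succ hx hpos, norm_mul, Real.norm_of_nonneg (by positivity)]
  gcongr

theorem besselI_nonneg (hμ : -1 ≤ μ) (hx : 0 ≤ x) : 0 ≤ besselI μ x :=
  tsum_nonneg (besselITerm_nonneg hμ hx)

theorem monotoneOn_besselI (hμ : 0 ≤ μ) : MonotoneOn (besselI μ) (Ici 0) := fun _ hx _ hy hxy ↦
  (summable_besselITerm μ hx).tsum_le_tsum (fun m ↦ monotoneOn_besselITerm hμ m hx hy hxy)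
    (summable_besselITerm μ hy)

theorem one_add_sq_div_two_le_cosh (t : ℝ) : 1 + t ^ 2 / 2 ≤ Real.cosh t := by
  have hcosh : Real.cosh t = 1 + 2 * Real.sinh (t / 2) ^ 2 := by
    rw [← mul_div_cancel₀ t two_ne_zero, mul_div_assoc, Real.cosh_two_mul, Real.cosh_sq]
    ring_nf
  have hsinh : (t / 2) ^ 2 ≤ Real.sinh (t / 2) ^ 2 := by
    rw [sq_le_sq, Real.abs_sinh]
    exact Real.self_le_sinh_iff.2 (abs_nonneg _)
  linarith

theorem integrable_exp_neg_mul_sq_add_mul {b : ℝ} (hb : 0 < b) (c : ℝ) :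
    Integrable fun t : ℝ ↦ Real.exp (-b * t ^ 2 + c * t) := by
  have h := (integrable_cexp_quadratic (b := b) (by simpa using hb) c 0).norm
  simpa [Complex.norm_exp, ← Complex.ofReal_pow] using h

theorem integrable_exp_neg_mul_sq_mul_cosh {b : ℝ} (hb : 0 < b) (c : ℝ) :
    Integrable fun t : ℝ ↦ Real.exp (-b * t ^ 2) * Real.cosh (c * t) := by
  refine (((integrable_exp_neg_mul_sq_add_mul hb c).add
    (integrable_exp_neg_mul_sq_add_mul hb (-c))).div_const 2).congr (.of_forall fun t ↦ ?_)
  simp only [Pi.add_apply, Real.exp_add, Real.cosh_eq, neg_mul]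
  ring

theorem integrable_exp_neg_mul_cosh_mul_cosh (ν : ℝ) (hx : 0 < x) :
    Integrable fun t : ℝ ↦ Real.exp (-(x * Real.cosh t)) * Real.cosh (ν * t) := by
  refine (integrable_exp_neg_mul_sq_mul_cosh (half_pos hx) ν).mono' (by fun_prop)
    (.of_forall fun t ↦ ?_)
  have hexp : -(x * Real.cosh t) ≤ -(x / 2) * t ^ 2 := by
    nlinarith [one_add_sq_div_two_le_cosh t]
  rw [Real.norm_of_nonneg (by positivity)]
  gcongr

theorem besselK_nonneg (ν x : ℝ) : 0 ≤ besselK ν x :=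
  integral_nonneg fun t ↦ mul_nonneg (Real.exp_nonneg _) (Real.cosh_pos (ν * t)).le

theorem antitoneOn_besselK (ν : ℝ) : AntitoneOn (besselK ν) (Ioi 0) := by
  intro x hx y hy hxy
  refine integral_mono (integrable_exp_neg_mul_cosh_mul_cosh ν hy).integrableOn
    (integrable_exp_neg_mul_cosh_mul_cosh ν hx).integrableOn fun t ↦ ?_
  dsimp only
  gcongr

theorem besselI_mul_besselK_le (hμ : 0 ≤ μ) (hx : 0 < x) (hxy : x ≤ y) :
    besselI μ x * besselK ν y ≤ besselI μ y * besselK ν x :=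
  have hy : 0 < y := hx.trans_le hxy
  mul_le_mul (monotoneOn_besselI hμ hx.le hy.le hxy) (antitoneOn_besselK ν hx hy hxy)
    (besselK_nonneg ν y) (besselI_nonneg (by linarith) hy.le)

theorem besselI_mul_sub_besselI_mul_besselK_nonpos {z c : ℝ} (hμ : 0 ≤ μ) (hx : 0 < x)
    (hxy : x ≤ y) (hyz : y ≤ z) (hc : 0 ≤ c) :
    besselI μ y * (besselK ν z * besselI μ x - c * besselK ν x) -
      besselI μ x * besselK ν y * (besselI μ z - c) ≤ 0 :=
  calc
    _ = besselI μ x * (besselI μ y * besselK ν z - besselI μ z * besselK ν y) +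
        c * (besselI μ x * besselK ν y - besselI μ y * besselK ν x) := by ring
    _ ≤ 0 := add_nonpos
      (mul_nonpos_of_nonneg_of_nonpos (besselI_nonneg (by linarith) hx.le)
        (sub_nonpos.2 (besselI_mul_besselK_le hμ (hx.trans_le hxy) hyz)))
      (mul_nonpos_of_nonneg_of_nonpos hc (sub_nonpos.2 (besselI_mul_besselK_le hμ hx hxy)))

end

/-- **Lemma 3.7, sign of the Green's function under (H₀').**
For `α ≥ 1`, `ν = (1−α)/2`, `λ < 0`, `0 < η < 1` and hypothesis `(H₀')`
(`δ > 0`, `K_ν(√|λ|) − δη^ν K_ν(η√|λ|) ≤ 0`,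
`I_{−ν}(√|λ|) − δη^ν I_{−ν}(η√|λ|) > 0`), the Green's function satisfies
`G(x,t) ≤ 0` on `[0,1] × (0,1]`. -/
theorem greenIK_nonpos (α lam δ η ν : ℝ) (hα : 1 ≤ α)
    (hν : ν = (1 - α) / 2) (hlam : lam < 0)
    (hη0 : 0 < η) (hη1 : η < 1) (hδ : 0 < δ)
    (hH1 : besselK ν (Real.sqrt |lam|)
        - δ * η ^ ν * besselK ν (η * Real.sqrt |lam|) ≤ 0)
    (hH2 : 0 < besselI (-ν) (Real.sqrt |lam|)
        - δ * η ^ ν * besselI (-ν) (η * Real.sqrt |lam|)) :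
    ∀ x ∈ Set.Icc (0 : ℝ) 1, ∀ t ∈ Set.Ioc (0 : ℝ) 1, greenIK ν lam δ η x t ≤ 0 := by
  rintro x ⟨hx0, hx1⟩ t ⟨ht0, ht1⟩
  have hμ : 0 ≤ -ν := by linarith
  have hm : 0 < Real.sqrt |lam| := Real.sqrt_pos.2 (abs_pos.2 hlam.ne)
  have hI {y : ℝ} (hy : 0 ≤ y) : 0 ≤ besselI (-ν) (y * Real.sqrt |lam|) :=
    besselI_nonneg (by linarith) (by positivity)
  have hxm : x * Real.sqrt |lam| ≤ Real.sqrt |lam| := mul_le_of_le_one_left hm.le hx1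
  have htm : t * Real.sqrt |lam| ≤ Real.sqrt |lam| := mul_le_of_le_one_left hm.le ht1
  have hweight : 0 ≤ t ^ ν * x ^ ν := by positivity
  have hbracket {y : ℝ} (hy : 0 ≤ y) : besselI (-ν) (y * Real.sqrt |lam|) *
        (besselK ν (Real.sqrt |lam|) - δ * η ^ ν * besselK ν (η * Real.sqrt |lam|)) -
      besselK ν (y * Real.sqrt |lam|) *
        (besselI (-ν) (Real.sqrt |lam|) - δ * η ^ ν * besselI (-ν) (η * Real.sqrt |lam|)) ≤ 0 :=
    sub_nonpos.2 <| (mul_nonpos_of_nonneg_of_nonpos (hI hy) hH1).trans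
      (mul_nonneg (besselK_nonneg ν _) hH2.le)
  simp only [greenIK]
  split_ifs with _ hxt hxt <;> refine div_nonpos_of_nonpos_of_nonneg ?_ hH2.le
  · exact mul_nonpos_of_nonneg_of_nonpos (mul_nonneg hweight (hI hx0)) (hbracket ht0.le)
  · exact mul_nonpos_of_nonneg_of_nonpos (mul_nonneg hweight (hI ht0.le)) (hbracket hx0)
  · refine mul_nonpos_of_nonneg_of_nonpos (mul_nonneg hweight (hI hx0)) (sub_nonpos.2 ?_)
    rw [mul_comm (besselK ν _)]
    exact besselI_mul_besselK_le hμ (mul_pos ht0 hm) htm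
  · have htx : t * Real.sqrt |lam| ≤ x * Real.sqrt |lam| := by gcongr; exact (not_le.1 hxt).le
    exact mul_nonpos_of_nonneg_of_nonpos hweight (besselI_mul_sub_besselI_mul_besselK_nonpos hμ
      (mul_pos ht0 hm) htx hxm (mul_nonneg (by positivity) (hI hη0.le)))
end
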